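/- Let 0 ≤ α < ω₁ and let (X_t)_{t∈T} be a family of nonempty topological spaces such that X = ∏_{t∈T} X_t is pseudo-ℵ₁-compact and such that for every at most countable set T₀ ⊆ T the product ∏_{t∈T₀} X_t is α-universal and hereditarily pseudo-ℵ₁-compact. Then every functionally measurable set E ⊆ X is α-embedded in X. -/

import Mathlib

/-!
A functionally measurable set `E`, and a set `B` of a functional class in `E`, turn out to be
determined by countably many coordinates `Q`. A continuous section of the projection to the
coordinates in `Q` then carries `B` to a set of the same class in the projection of `E`, where it
extends by α-universality, and the preimage of the extension under the projection is as required.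

Countably many coordinates suffice because every continuous `f : E → ℝ` depends on countably many
of them. Otherwise, by maximality, there are for some `ε > 0` uncountably many pairs `(x, y)` of
points of `E` with `|f x - f y| > ε` whose difference sets are finite and pairwise disjoint. For
each pair, the points `u` near `x` keep the property `|f u - f v| > ε`, where `v` is `u` with the
coordinates in the difference set replaced by those of `y`. As `E` is pseudo-ℵ₁-compact, the open
sets of these `u` accumulate at some `z ∈ E`. A neighbourhood of `z` restricts finitely many
coordinates and so misses most difference sets; hence it contains, with some `u`, the modified point
`v`, and `f` is not continuous at `z`.

The pseudo-ℵ₁-compactness of `E` comes from its countable projections. Among uncountably many basic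
open sets, uncountably many have supports that are pairwise disjoint outside a countable set of
coordinates. If their projections to these coordinates accumulate at a point, so do the sets
themselves, since points of two basic sets that agree on the common support can be glued.
-/

open Set Topology

/-- A topological space is pseudo-ℵ₁-compact if every locally finite family of
(pairwise distinct) nonempty open subsets is at most countable. -/
def PseudoAleph1Compact (Z : Type*) [TopologicalSpace Z] : Prop :=
  ∀ 𝒰 : Set (Set Z), (∀ U ∈ 𝒰, IsOpen U) → (∀ U ∈ 𝒰, U.Nonempty) →
    LocallyFinite (fun U : 𝒰 => (U : Set Z)) → 𝒰.Countable

/-- `A` is functionally closed in `Z` if it is the zero set of a continuous real function. -/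
def FunctionallyClosed {Z : Type*} [TopologicalSpace Z] (A : Set Z) : Prop :=
  ∃ f : Z → ℝ, Continuous f ∧ A = f ⁻¹' {0}

/-- `A` is functionally open in `Z` if its complement is functionally closed. -/
def FunctionallyOpen {Z : Type*} [TopologicalSpace Z] (A : Set Z) : Prop :=
  FunctionallyClosed Aᶜ

/-- `FunClass Z true α A` : `A` is of the functionally additive class `α` in `Z`;
`FunClass Z false α A` : `A` is of the functionally multiplicative class `α` in `Z`. -/
inductive FunClass (Z : Type*) [TopologicalSpace Z] : Bool → Ordinal.{0} → Set Z → Prop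
  | open_ (A : Set Z) (h : FunctionallyOpen A) : FunClass Z true 0 A
  | closed_ (A : Set Z) (h : FunctionallyClosed A) : FunClass Z false 0 A
  | union (α : Ordinal.{0}) (A : ℕ → Set Z) (β : ℕ → Ordinal.{0}) (hα : α ≠ 0)
      (hβ : ∀ n, β n < α) (h : ∀ n, FunClass Z false (β n) (A n)) :
      FunClass Z true α (⋃ n, A n)
  | inter (α : Ordinal.{0}) (A : ℕ → Set Z) (β : ℕ → Ordinal.{0}) (hα : α ≠ 0)
      (hβ : ∀ n, β n < α) (h : ∀ n, FunClass Z true (β n) (A n)) :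
      FunClass Z false α (⋂ n, A n)

/-- `A` is α-embedded in `Z` if every subset of `A` of functionally multiplicative class `α`
in the subspace `A` is the trace on `A` of a set of functionally multiplicative class `α` in `Z`. -/
def IsAlphaEmbedded {Z : Type*} [TopologicalSpace Z] (α : Ordinal.{0}) (A : Set Z) : Prop :=
  ∀ B : Set Z, B ⊆ A → FunClass ↥A false α (Subtype.val ⁻¹' B) →
    ∃ C : Set Z, FunClass Z false α C ∧ C ∩ A = B

/-- `Z` is α-universal if every subset of `Z` is α-embedded in `Z`. -/
def AlphaUniversal (Z : Type*) [TopologicalSpace Z] (α : Ordinal.{0}) : Prop :=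
  ∀ A : Set Z, IsAlphaEmbedded α A

/-- The projection of the product `∀ t, X t` onto the coordinates in `S`. -/
def proj {T : Type*} {X : T → Type*} (S : Set T) (x : ∀ t, X t) : ∀ t : S, X t.1 :=
  fun t => x t.1

/-- A functionally measurable (Baire) set: a member of some functionally additive or
multiplicative class `α` with `α < ω₁`. -/
def FunctionallyMeasurable {Z : Type*} [TopologicalSpace Z] (A : Set Z) : Prop :=
  ∃ (b : Bool) (β : Ordinal.{0}), β < (Cardinal.aleph 1).ord ∧ FunClass Z b β A

/-- `Y` has a regular `Gδ`-diagonal. -/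
def RegularGDeltaDiagonal (Y : Type*) [TopologicalSpace Y] : Prop :=
  ∃ G : ℕ → Set (Y × Y), (∀ n, IsOpen (G n)) ∧
    {p : Y × Y | p.1 = p.2} = ⋂ n, G n ∧
    {p : Y × Y | p.1 = p.2} = ⋂ n, closure (G n)

section CombinatorialSelection

variable {ι T : Type*}

theorem exists_not_countable_pairwiseDisjoint_or_exists_countable_inter_nonempty {D : ι → Set T}
    {C : Set ι} (hD : ∀ i ∈ C, (D i).Countable) :
    (∃ J ⊆ C, ¬ J.Countable ∧ J.PairwiseDisjoint D) ∨
      ∃ A : Set T, A.Countable ∧ ∀ i ∈ C, (D i).Nonempty → (D i ∩ A).Nonempty := by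
  obtain ⟨J, hJ⟩ := zorn_subset {J : Set ι | J ⊆ C ∧ J.PairwiseDisjoint D} fun c hc hchain =>
    ⟨⋃₀ c, ⟨sUnion_subset fun s hs => (hc hs).1,
      (pairwiseDisjoint_sUnion hchain.directedOn).2 fun s hs => (hc hs).2⟩,
      fun s hs => subset_sUnion_of_mem hs⟩
  by_cases hcount : J.Countable
  · refine .inr ⟨⋃ j ∈ J, D j, hcount.biUnion fun j hj => hD j (hJ.prop.1 hj),
      fun i hi hne => ?_⟩
    by_contra hdisj
    have hdisj : ∀ j ∈ J, Disjoint (D i) (D j) := by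
      simpa only [not_nonempty_iff_eq_empty, ← disjoint_iff_inter_eq_empty,
        disjoint_iUnion_right] using hdisj
    have hiJ : i ∈ J := hJ.le_of_ge ⟨insert_subset hi hJ.prop.1,
      hJ.prop.2.insert fun j hj _ => hdisj j hj⟩ (subset_insert i J) (mem_insert i J)
    exact hne.ne_empty (disjoint_self.1 (hdisj i hiJ))
  · exact .inl ⟨J, hJ.prop.1, hcount, hJ.prop.2⟩

theorem exists_not_countable_pairwiseDisjoint_sdiff_of_ncard_le {K : ι → Set T}
    (hK : ∀ i, (K i).Finite) {C : Set ι} (hC : ¬ C.Countable) (n : ℕ) {R : Set T}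
    (hR : R.Countable) (hn : ∀ i ∈ C, (K i \ R).ncard ≤ n) :
    ∃ J ⊆ C, ¬ J.Countable ∧ ∃ R' : Set T, R'.Countable ∧
      J.PairwiseDisjoint fun i => K i \ R' := by
  induction n generalizing R with
  | zero =>
    have hempty : ∀ i ∈ C, K i \ R = ∅ := fun i hi =>
      (ncard_eq_zero (hK i).sdiff).1 (Nat.le_zero.1 (hn i hi))
    refine ⟨C, subset_rfl, hC, R, hR, fun i hi j _ _ => ?_⟩
    simp only [Function.onFun, hempty i hi, empty_disjoint]
  | succ n ih =>
    rcases exists_not_countable_pairwiseDisjoint_or_exists_countable_inter_nonempty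
      fun i (_ : i ∈ C) => ((hK i).sdiff (t := R)).countable with ⟨J, hJ, hJc, hd⟩ | ⟨A, hA, hmeet⟩
    · exact ⟨J, hJ, hJc, R, hR, hd⟩
    · refine ih (hR.union hA) fun i hi => ?_
      rw [← sdiff_sdiff]
      rcases (K i \ R).eq_empty_or_nonempty with hemp | hne
      · simp [hemp]
      · obtain ⟨t, ht, htA⟩ := hmeet i hi hne
        have hlt : ((K i \ R) \ A).ncard < (K i \ R).ncard :=
          ncard_lt_ncard ⟨sdiff_subset, fun hsub => (hsub ht).2 htA⟩ (hK i).sdiff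
        exact Nat.le_of_lt_succ (hlt.trans_le (hn i hi))

/-- A weak form of the `Δ`-system lemma: the root is countable rather than finite, and the traces
of the sets on the root need not coincide. -/
theorem exists_not_countable_pairwiseDisjoint_sdiff [Uncountable ι] {K : ι → Set T}
    (hK : ∀ i, (K i).Finite) :
    ∃ J : Set ι, ¬ J.Countable ∧ ∃ R : Set T, R.Countable ∧
      J.PairwiseDisjoint fun i => K i \ R := by
  obtain ⟨n, hn⟩ : ∃ n : ℕ, ¬ {i | (K i).ncard ≤ n}.Countable := by
    by_contra! hcount
    have hcover : ⋃ n : ℕ, {i | (K i).ncard ≤ n} = univ :=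
      eq_univ_of_forall fun i => mem_iUnion_of_mem (K i).ncard (le_refl (K i).ncard)
    exact not_countable_univ (hcover ▸ countable_iUnion hcount)
  obtain ⟨J, -, hJ⟩ := exists_not_countable_pairwiseDisjoint_sdiff_of_ncard_le hK hn n
    countable_empty fun i hi => by rwa [sdiff_empty]
  exact ⟨J, hJ⟩

theorem finite_setOf_inter_nonempty_of_pairwiseDisjoint {D : ι → Set T} {J : Set ι}
    (hD : J.PairwiseDisjoint D) {L : Set T} (hL : L.Finite) :
    {i : J | (D i ∩ L).Nonempty}.Finite := by
  have hcover : {i : J | (D i ∩ L).Nonempty} ⊆ ⋃ t ∈ L, {i : J | t ∈ D i} := by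
    rintro i ⟨t, hti, htL⟩
    exact mem_biUnion htL hti
  refine (hL.biUnion fun t _ => Set.Subsingleton.finite fun i hi j hj => ?_).subset hcover
  exact Subtype.ext (hD.elim_set i.2 j.2 t hi hj)

end CombinatorialSelection

section PseudoAleph1Compact

variable {Y Z ι : Type*} [TopologicalSpace Y] [TopologicalSpace Z]

theorem PseudoAleph1Compact.countable_of_locallyFinite (hZ : PseudoAleph1Compact Z)
    {W : ι → Set Z} (hopen : ∀ i, IsOpen (W i)) (hne : ∀ i, (W i).Nonempty)
    (hW : LocallyFinite W) : Countable ι := by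
  have hrange : (range W).Countable :=
    hZ _ (forall_mem_range.2 hopen) (forall_mem_range.2 hne) hW.on_range
  have hfiber : ∀ U ∈ range W, (W ⁻¹' {U}).Countable := by
    rintro _ ⟨i, rfl⟩
    obtain ⟨z, hz⟩ := hne i
    exact ((hW.point_finite z).subset fun j (hj : W j = W i) =>
      show z ∈ W j from hj ▸ hz).countable
  rw [← countable_univ_iff, ← preimage_range W, ← biUnion_preimage_singleton]
  exact hrange.biUnion hfiber

theorem PseudoAleph1Compact.of_surjective (hY : PseudoAleph1Compact Y) {g : Y → Z}
    (hg : Continuous g) (hsurj : g.Surjective) : PseudoAleph1Compact Z :=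
  fun _ hopen hne hfin => hY.countable_of_locallyFinite
    (fun U => (hopen U U.2).preimage hg) (fun U => (hne U U.2).preimage hsurj)
    (hfin.preimage_continuous hg)

end PseudoAleph1Compact

theorem regularGDeltaDiagonal_of_metricSpace (Y : Type*) [MetricSpace Y] :
    RegularGDeltaDiagonal Y := by
  let G (n : ℕ) : Set (Y × Y) := {p | dist p.1 p.2 < 1 / ((n : ℝ) + 1)}
  have hopen : ∀ n, IsOpen (G n) := fun n => isOpen_lt continuous_dist continuous_const
  have hdiag : ∀ n, {p : Y × Y | p.1 = p.2} ⊆ G n := by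
    rintro n ⟨x, y⟩ (rfl : x = y)
    simpa [G] using Nat.cast_add_one_pos n
  have hclosure : ∀ n, closure (G n) ⊆ {p | dist p.1 p.2 ≤ 1 / ((n : ℝ) + 1)} := fun n =>
    closure_lt_subset_le continuous_dist continuous_const
  have hsub : ⋂ n, closure (G n) ⊆ {p | p.1 = p.2} := fun p hp => dist_le_zero.1 <|
    ge_of_tendsto' tendsto_one_div_add_atTop_nhds_zero_nat fun n => hclosure n (mem_iInter.1 hp n)
  exact ⟨G, hopen,
    (subset_iInter hdiag).antisymm ((iInter_mono fun n => subset_closure).trans hsub),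
    (subset_iInter fun n => (hdiag n).trans subset_closure).antisymm hsub⟩

theorem FunClass.preimage {Y Z : Type*} [TopologicalSpace Y] [TopologicalSpace Z] {g : Y → Z}
    (hg : Continuous g) {b : Bool} {β : Ordinal.{0}} {A : Set Z} (h : FunClass Z b β A) :
    FunClass Y b β (g ⁻¹' A) := by
  induction h with
  | open_ A h =>
    obtain ⟨f, hf, hA⟩ := h
    exact .open_ _ ⟨f ∘ g, hf.comp hg, by rw [← preimage_compl, hA, preimage_comp]⟩
  | closed_ A h =>
    obtain ⟨f, hf, rfl⟩ := h
    exact .closed_ _ ⟨f ∘ g, hf.comp hg, rfl⟩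
  | union α A β hα hβ h ih =>
    rw [preimage_iUnion]
    exact .union _ _ β hα hβ ih
  | inter α A β hα hβ h ih =>
    rw [preimage_iInter]
    exact .inter _ _ β hα hβ ih

theorem IsAlphaEmbedded.exists_funClass_inter_eq {Y Z : Type*} [TopologicalSpace Y]
    [TopologicalSpace Z] {α : Ordinal.{0}} {π : Z → Y} {s : Y → Z} (hπ : Continuous π)
    (hs : Continuous s) {E B : Set Z} (hF : IsAlphaEmbedded α (s ⁻¹' E))
    (hE : (s ∘ π) ⁻¹' E = E) (hB : (s ∘ π) ⁻¹' B = B) (hBE : B ⊆ E)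
    (hBα : FunClass E false α (Subtype.val ⁻¹' B)) :
    ∃ C : Set Z, FunClass Z false α C ∧ C ∩ E = B := by
  obtain ⟨C, hC, hCF⟩ := hF (s ⁻¹' B) (preimage_mono hBE)
    (hBα.preimage (hs.restrictPreimage (s := E)))
  refine ⟨π ⁻¹' C, hC.preimage hπ, ?_⟩
  calc π ⁻¹' C ∩ E = π ⁻¹' (C ∩ s ⁻¹' E) := by
        rw [preimage_inter, ← preimage_comp, hE]
    _ = B := by rw [hCF, ← preimage_comp, hB]

section Products

variable {T : Type*} {X : T → Type*} {Y : Type*}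

/-- The function `g` on the set `E` of a product is determined by countably many coordinates. This
is the counterpart of `∃ A, A.Countable ∧ DependsOn g A` for functions on a subset of the
product. -/
def DependsOnCountably {E : Set (∀ t, X t)} (g : E → Y) : Prop :=
  ∃ A : Set T, A.Countable ∧ ∀ ⦃x y : E⦄, (∀ t ∈ A, x.1 t = y.1 t) → g x = g y

theorem DependsOnCountably.comp {Y' : Type*} {E : Set (∀ t, X t)} {g : E → Y}
    (hg : DependsOnCountably g) (φ : Y → Y') : DependsOnCountably (φ ∘ g) :=
  let ⟨A, hA, h⟩ := hg
  ⟨A, hA, fun _ _ hxy => congrArg φ (h hxy)⟩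

theorem DependsOnCountably.pi {ι : Type*} [Countable ι] {E : Set (∀ t, X t)} {g : ι → E → Y}
    (hg : ∀ i, DependsOnCountably (g i)) : DependsOnCountably fun x i => g i x := by
  choose A hA h using hg
  exact ⟨⋃ i, A i, countable_iUnion hA, fun x y hxy => funext fun i =>
    h i fun t ht => hxy t (mem_iUnion_of_mem i ht)⟩

theorem inter_nonempty_of_image_proj_inter_nonempty {K L Q : Set T} {U V E : Set (∀ t, X t)}
    (hU : DependsOn (· ∈ U) K) (hV : DependsOn (· ∈ V) L) (hE : DependsOn (· ∈ E) Q)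
    (hKL : K ∩ L ⊆ Q) (h : (proj Q '' U ∩ proj Q '' V ∩ proj Q '' E).Nonempty) :
    (U ∩ V ∩ E).Nonempty := by
  classical
  obtain ⟨_, ⟨⟨a, ha, rfl⟩, b, hb, hba⟩, e, he, hea⟩ := h
  have hbQ : ∀ t ∈ Q, b t = a t := fun t ht => congrFun hba ⟨t, ht⟩
  have heQ : ∀ t ∈ Q, e t = a t := fun t ht => congrFun hea ⟨t, ht⟩
  let u := K.piecewise a b
  have huK : ∀ t ∈ K, a t = u t := fun t ht => by simp [u, ht]
  have huL : ∀ t ∈ L, b t = u t := fun t ht => by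
    by_cases htK : t ∈ K
    · simpa [u, htK] using hbQ t (hKL ⟨htK, ht⟩)
    · simp [u, htK]
  have huQ : ∀ t ∈ Q, e t = u t := fun t ht => by
    by_cases htK : t ∈ K <;> simp [u, htK, heQ t ht, hbQ t ht]
  exact ⟨u, ⟨(hU huK).mp ha, (hV huL).mp hb⟩, (hE huQ).mp he⟩

/-- The coordinates in which two points of a product differ. -/
def differenceSet (x y : ∀ t, X t) : Set T := {t | x t ≠ y t}

theorem piecewise_differenceSet (x y : ∀ t, X t) [∀ t, Decidable (t ∈ differenceSet x y)] :
    (differenceSet x y).piecewise y x = y := by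
  funext t
  by_cases ht : t ∈ differenceSet x y
  · rw [piecewise_eq_of_mem _ _ _ ht]
  · rw [piecewise_eq_of_notMem _ _ _ ht, not_not.1 ht]

variable [∀ t, TopologicalSpace (X t)]

theorem continuous_piecewise_const_left (D : Set T) [∀ t, Decidable (t ∈ D)] (y : ∀ t, X t) :
    Continuous fun u : ∀ t, X t => D.piecewise y u := by
  refine continuous_pi fun t => ?_
  by_cases ht : t ∈ D
  · simpa only [piecewise_eq_of_mem _ _ _ ht] using continuous_const
  · simpa only [piecewise_eq_of_notMem _ _ _ ht] using continuous_apply t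

theorem continuous_proj (Q : Set T) : Continuous (proj (X := X) Q) :=
  continuous_pi fun t => continuous_apply t.1

theorem isOpenMap_proj (Q : Set T) : IsOpenMap (proj (X := X) Q) := by
  classical
  exact isOpenMap_fst.comp (Homeomorph.piEquivPiSubtypeProd (· ∈ Q) X).isOpenMap

theorem exists_continuous_rightInverse_proj [∀ t, Nonempty (X t)] (Q : Set T) :
    ∃ s : (∀ t : Q, X t) → ∀ t, X t, Continuous s ∧ Function.RightInverse s (proj Q) := by
  classical
  let e := Homeomorph.piEquivPiSubtypeProd (· ∈ Q) X
  refine ⟨fun w => e.symm (w, fun _ => Classical.arbitrary _), by fun_prop, fun w => ?_⟩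
  exact congrArg Prod.fst (e.apply_symm_apply _)

theorem exists_isOpen_dependsOn_finite {E : Set (∀ t, X t)} {x : E} {O : Set E} (hO : O ∈ 𝓝 x) :
    ∃ (L : Set T) (W : Set (∀ t, X t)), L.Finite ∧ IsOpen W ∧ x.1 ∈ W ∧
      Subtype.val ⁻¹' W ⊆ O ∧ DependsOn (· ∈ W) L := by
  obtain ⟨N, hN, hNO⟩ := mem_nhds_subtype E x O |>.1 hO
  obtain ⟨V, hVN, hV, hxV⟩ := mem_nhds_iff.1 hN
  obtain ⟨L, U, hU, hUV⟩ := isOpen_pi_iff.1 hV x hxV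
  refine ⟨L, (L : Set T).pi U, L.finite_toSet,
    isOpen_set_pi L.finite_toSet fun t ht => (hU t ht).1, fun t ht => (hU t ht).2,
    fun y hy => hNO (hVN (hUV hy)), fun y z hyz => propext ?_⟩
  exact forall₂_congr fun t ht => by rw [hyz t ht]

theorem pseudoAleph1Compact_of_image_proj {E : Set (∀ t, X t)} {S : Set T} (hS : S.Countable)
    (hE : DependsOn (· ∈ E) S)
    (hproj : ∀ Q : Set T, Q.Countable → PseudoAleph1Compact (proj Q '' E)) :
    PseudoAleph1Compact E := by
  intro 𝒰 hopen hne hfin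
  by_contra hcount
  have : Uncountable 𝒰 := ⟨hcount⟩
  choose x hx using fun U : 𝒰 => hne U U.2
  choose K W hK hW hxW hWU hWK using fun U : 𝒰 =>
    exists_isOpen_dependsOn_finite ((hopen U U.2).mem_nhds (hx U))
  obtain ⟨J, hJ, R, hR, hKR⟩ := exists_not_countable_pairwiseDisjoint_sdiff hK
  have hQ : (S ∪ R).Countable := hS.union hR
  refine hJ ((hproj _ hQ).countable_of_locallyFinite
    (W := fun i : J => Subtype.val ⁻¹' (proj (S ∪ R) '' W i))
    (fun i => (isOpenMap_proj _ _ (hW i)).preimage continuous_subtype_val)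
    (fun i => ⟨⟨_, mem_image_of_mem _ (x i).2⟩, mem_image_of_mem _ (hxW i)⟩) ?_)
  rintro ⟨_, z, hz, rfl⟩
  obtain ⟨O, hO, hOfin⟩ := hfin ⟨z, hz⟩
  obtain ⟨L, V, hL, hV, hzV, hVO, hVL⟩ := exists_isOpen_dependsOn_finite hO
  refine ⟨Subtype.val ⁻¹' (proj (S ∪ R) '' V),
    ((isOpenMap_proj _ _ hV).preimage continuous_subtype_val).mem_nhds (mem_image_of_mem _ hzV),
    ((hOfin.preimage Subtype.val_injective.injOn).union
      (finite_setOf_inter_nonempty_of_pairwiseDisjoint hKR hL)).subset ?_⟩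
  rintro i ⟨⟨w, hw⟩, hwW, hwV⟩
  refine or_iff_not_imp_right.2 fun hKL => ?_
  have hsub : K i ∩ L ⊆ S ∪ R := fun t ht => .inr (by_contra fun htR => hKL ⟨t, ⟨ht.1, htR⟩, ht.2⟩)
  obtain ⟨u, ⟨huW, huV⟩, huE⟩ := inter_nonempty_of_image_proj_inter_nonempty (hWK i) hVL
    (hE.mono subset_union_left) hsub ⟨w, ⟨hwW, hwV⟩, hw⟩
  exact ⟨⟨u, huE⟩, hWU i huW, hVO huV⟩

theorem exists_mem_finite_differenceSet {E : Set (∀ t, X t)} {S : Set T}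
    (hE : DependsOn (· ∈ E) S) {P : Set (E × E)} (hP : IsOpen P) {x y : E} (hxy : (x, y) ∈ P)
    (hS : ∀ t ∈ S, x.1 t = y.1 t) :
    ∃ y' : E, (x, y') ∈ P ∧ (differenceSet x.1 y').Finite ∧
      differenceSet x.1 y' ⊆ differenceSet x.1 y := by
  classical
  obtain ⟨L, W, hL, -, hyW, hWP, hWL⟩ := exists_isOpen_dependsOn_finite
    ((hP.preimage (Continuous.prodMk_right x)).mem_nhds hxy)
  let y' := L.piecewise y.1 x.1
  have hy'E : y' ∈ E := (hE fun t ht => by by_cases htL : t ∈ L <;> simp [y', htL, hS t ht]).mp x.2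
  have hy'W : y' ∈ W := (hWL fun t ht => by simp [y', ht]).mp hyW
  have hdiff : ∀ t ∈ differenceSet x.1 y', t ∈ L ∧ y' t = y.1 t := fun t ht => by
    by_cases htL : t ∈ L
    · simp [y', htL]
    · simp [differenceSet, y', htL] at ht
  exact ⟨⟨y', hy'E⟩, hWP hy'W, hL.subset fun t ht => (hdiff t ht).1,
    fun t ht heq => ht (heq.trans (hdiff t ht).2.symm)⟩

theorem countable_of_pairwiseDisjoint_differenceSet {E : Set (∀ t, X t)}
    (hpc : PseudoAleph1Compact E) {S : Set T} (hE : DependsOn (· ∈ E) S) {P : Set (E × E)}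
    (hP : IsOpen P) (hdiag : ∀ z, (z, z) ∉ closure P) {J : Set (E × E)} (hJP : J ⊆ P)
    (hJS : ∀ p ∈ J, ∀ t ∈ S, p.1.1 t = p.2.1 t)
    (hJ : J.PairwiseDisjoint fun p => differenceSet p.1.1 p.2) : J.Countable := by
  classical
  have hrE : ∀ (p : J) (u : E),
      (differenceSet p.1.1.1 p.1.2).piecewise p.1.2.1 u.1 ∈ E := fun p u =>
    (hE fun t ht => by
      have htD : t ∉ differenceSet p.1.1.1 p.1.2 := not_not.2 (hJS p p.2 t ht)
      rw [piecewise_eq_of_notMem _ _ _ htD]).mp u.2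
  let r (p : J) (u : E) : E := ⟨_, hrE p u⟩
  have hr : ∀ p, Continuous (r p) := fun p =>
    ((continuous_piecewise_const_left _ _).comp continuous_subtype_val).subtype_mk _
  have hr_fst : ∀ p : J, r p p.1.1 = p.1.2 := fun p => Subtype.ext (piecewise_differenceSet _ _)
  refine hpc.countable_of_locallyFinite (W := fun p : J => {u | (u, r p u) ∈ P})
    (fun p => hP.preimage (continuous_id.prodMk (hr p)))
    (fun p => ⟨p.1.1, by simpa only [mem_ofPred_eq, hr_fst p] using hJP p.2⟩) fun z => ?_
  obtain ⟨O, hO, hOP⟩ : ∃ O ∈ 𝓝 z, Disjoint (O ×ˢ O) P := by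
    have hnhds : (closure P)ᶜ ∈ 𝓝 (z, z) := isClosed_closure.isOpen_compl.mem_nhds (hdiag z)
    rw [nhds_prod_eq] at hnhds
    obtain ⟨O, hO, hsub⟩ := Filter.mem_prod_same_iff.1 hnhds
    exact ⟨O, hO, (subset_compl_iff_disjoint_right.1 hsub).mono_right subset_closure⟩
  obtain ⟨L, V, hL, hV, hzV, hVO, hVL⟩ := exists_isOpen_dependsOn_finite hO
  refine ⟨Subtype.val ⁻¹' V, (hV.preimage continuous_subtype_val).mem_nhds hzV,
    (finite_setOf_inter_nonempty_of_pairwiseDisjoint hJ hL).subset ?_⟩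
  rintro p ⟨u, huP, huV⟩
  by_contra hpL
  have hruV : (r p u).1 ∈ V := (hVL fun t ht => by
    have htD : t ∉ differenceSet p.1.1.1 p.1.2 := fun htD => hpL ⟨t, htD, ht⟩
    simp [r, htD]).mp huV
  exact disjoint_left.1 hOP (mk_mem_prod (hVO huV) (hVO hruV)) huP

theorem exists_countable_forall_eq_imp_notMem {E : Set (∀ t, X t)} (hpc : PseudoAleph1Compact E)
    {S : Set T} (hS : S.Countable) (hE : DependsOn (· ∈ E) S) {P : Set (E × E)} (hP : IsOpen P)
    (hdiag : ∀ z, (z, z) ∉ closure P) :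
    ∃ A : Set T, A.Countable ∧ ∀ x y : E, (∀ t ∈ A, x.1 t = y.1 t) → (x, y) ∉ P := by
  let C : Set (E × E) := {p ∈ P | (differenceSet p.1.1 p.2).Finite ∧ ∀ t ∈ S, p.1.1 t = p.2.1 t}
  rcases exists_not_countable_pairwiseDisjoint_or_exists_countable_inter_nonempty
    fun p (hp : p ∈ C) => hp.2.1.countable with ⟨J, hJC, hJc, hJ⟩ | ⟨A, hA, hmeet⟩
  · exact absurd (countable_of_pairwiseDisjoint_differenceSet hpc hE hP hdiag
      (fun p hp => (hJC hp).1) (fun p hp => (hJC hp).2.2) hJ) hJc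
  · refine ⟨S ∪ A, hS.union hA, fun x y hxy hP' => ?_⟩
    obtain ⟨y', hy'P, hfin, hsub⟩ :=
      exists_mem_finite_differenceSet hE hP hP' fun t ht => hxy t (.inl ht)
    have heq : ∀ t ∈ S ∪ A, x.1 t = y'.1 t := fun t ht =>
      by_contra fun hne => hsub hne (hxy t ht)
    have hne : (differenceSet x.1 y').Nonempty := by
      by_contra hempty
      have hxy' : x = y' := Subtype.ext <| funext fun t => by_contra fun ht => hempty ⟨t, ht⟩
      exact hdiag x (subset_closure (hxy' ▸ hy'P))
    obtain ⟨t, htD, htA⟩ := hmeet (x, y') ⟨hy'P, hfin, fun t ht => heq t (.inl ht)⟩ hne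
    exact htD (heq t (.inr htA))

theorem dependsOnCountably_of_continuous [TopologicalSpace Y] (hY : RegularGDeltaDiagonal Y)
    {E : Set (∀ t, X t)} (hpc : PseudoAleph1Compact E) {S : Set T} (hS : S.Countable)
    (hE : DependsOn (· ∈ E) S) {f : E → Y} (hf : Continuous f) : DependsOnCountably f := by
  obtain ⟨G, hG, hGdiag, hGclosure⟩ := hY
  have hff : Continuous (Prod.map f f) := hf.prodMap hf
  have hsep : ∀ n, ∃ A : Set T, A.Countable ∧
      ∀ x y : E, (∀ t ∈ A, x.1 t = y.1 t) → (f x, f y) ∈ closure (G n) := fun n => by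
    let P : Set (E × E) := Prod.map f f ⁻¹' (closure (G n))ᶜ
    have hdiag : ∀ z, (z, z) ∉ closure P := fun z hz => by
      have hPG : closure P ⊆ Prod.map f f ⁻¹' (G n)ᶜ := closure_minimal
        (preimage_mono (compl_subset_compl.2 subset_closure)) ((hG n).isClosed_compl.preimage hff)
      have hzG : (f z, f z) ∈ ⋂ n, G n := hGdiag ▸ rfl
      exact hPG hz (mem_iInter.1 hzG n)
    obtain ⟨A, hA, h⟩ := exists_countable_forall_eq_imp_notMem hpc hS hE
      (isClosed_closure.isOpen_compl.preimage hff) hdiag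
    exact ⟨A, hA, fun x y hxy => not_not.1 (h x y hxy)⟩
  choose A hA h using hsep
  refine ⟨⋃ n, A n, countable_iUnion hA, fun x y hxy => ?_⟩
  have hmem : (f x, f y) ∈ ⋂ n, closure (G n) :=
    mem_iInter.2 fun n => h n x y fun t ht => hxy t (mem_iUnion_of_mem n ht)
  rwa [← hGclosure] at hmem

theorem FunClass.dependsOnCountably {E : Set (∀ t, X t)} (hpc : PseudoAleph1Compact E) {S : Set T}
    (hS : S.Countable) (hE : DependsOn (· ∈ E) S) {b : Bool} {β : Ordinal.{0}} {B : Set E}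
    (hB : FunClass E b β B) : DependsOnCountably (· ∈ B) := by
  have hreal {f : E → ℝ} (hf : Continuous f) : DependsOnCountably f :=
    dependsOnCountably_of_continuous (regularGDeltaDiagonal_of_metricSpace ℝ) hpc hS hE hf
  induction hB with
  | open_ B h =>
    obtain ⟨f, hf, hB⟩ := h
    rw [compl_eq_comm] at hB
    exact hB ▸ (hreal hf).comp (· ≠ 0)
  | closed_ B h =>
    obtain ⟨f, hf, rfl⟩ := h
    exact (hreal hf).comp (· = 0)
  | union α B β hα hβ h ih =>
    simpa only [mem_iUnion, Function.comp_def] using (DependsOnCountably.pi ih).comp (∃ n, · n)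
  | inter α B β hα hβ h ih =>
    simpa only [mem_iInter, Function.comp_def] using (DependsOnCountably.pi ih).comp (∀ n, · n)

theorem FunctionallyMeasurable.exists_countable_dependsOn (hX : PseudoAleph1Compact (∀ t, X t))
    {E : Set (∀ t, X t)} (hE : FunctionallyMeasurable E) :
    ∃ S : Set T, S.Countable ∧ DependsOn (· ∈ E) S := by
  obtain ⟨b, β, -, hE⟩ := hE
  have huniv : PseudoAleph1Compact (univ : Set (∀ t, X t)) :=
    hX.of_surjective (Homeomorph.Set.univ _).symm.continuous (Homeomorph.Set.univ _).symm.surjective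
  obtain ⟨S, hS, h⟩ := (hE.preimage continuous_subtype_val).dependsOnCountably huniv
    countable_empty (dependsOn_const True)
  exact ⟨S, hS, fun x y hxy => h (x := ⟨x, trivial⟩) (y := ⟨y, trivial⟩) hxy⟩

theorem statement10_general [∀ t, Nonempty (X t)] {α : Ordinal.{0}} {E : Set (∀ t, X t)}
    {S : Set T} (hS : S.Countable) (hE : DependsOn (· ∈ E) S)
    (hemb : ∀ Q : Set T, Q.Countable → IsAlphaEmbedded α (proj Q '' E))
    (hpc : ∀ Q : Set T, Q.Countable → PseudoAleph1Compact (proj Q '' E)) :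
    IsAlphaEmbedded α E := by
  intro B hBE hB
  obtain ⟨A, hA, hBA⟩ :=
    hB.dependsOnCountably (pseudoAleph1Compact_of_image_proj hS hE hpc) hS hE
  obtain ⟨s, hs, hsQ⟩ := exists_continuous_rightInverse_proj (X := X) (S ∪ A)
  have hagree : ∀ x, ∀ t ∈ S ∪ A, s (proj (S ∪ A) x) t = x t := fun x t ht =>
    congrFun (hsQ (proj (S ∪ A) x)) ⟨t, ht⟩
  have hsE : ∀ x, s (proj (S ∪ A) x) ∈ E ↔ x ∈ E := fun x =>
    (hE fun t ht => hagree x t (.inl ht)).to_iff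
  have hsB : ∀ x, s (proj (S ∪ A) x) ∈ B ↔ x ∈ B := fun x => by
    have hmem (h : s (proj (S ∪ A) x) ∈ E) : s (proj (S ∪ A) x) ∈ B ↔ x ∈ B :=
      (hBA (x := ⟨_, h⟩) (y := ⟨x, (hsE x).1 h⟩) fun t ht => hagree x t (.inr ht)).to_iff
    exact ⟨fun h => (hmem (hBE h)).1 h, fun h => (hmem ((hsE x).2 (hBE h))).2 h⟩
  have himage : proj (S ∪ A) '' E = s ⁻¹' E := Subset.antisymm
    (image_subset_iff.2 fun x hx => (hsE x).2 hx) fun w hw => ⟨s w, hw, hsQ w⟩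
  exact (himage ▸ hemb _ (hS.union hA)).exists_funClass_inter_eq (continuous_proj _) hs
    (Set.ext hsE) (Set.ext hsB) hBE hB

end Products

/-- if the product `∏ t, X t` is pseudo-ℵ₁-compact and every at most
countable subproduct is α-universal and hereditarily pseudo-ℵ₁-compact, then every
functionally measurable set `E` in the product is α-embedded in it. -/
theorem statement10 {T : Type u} {X : T → Type v} [∀ t, TopologicalSpace (X t)]
    [∀ t, Nonempty (X t)]
    (α : Ordinal.{0}) (hα : α < (Cardinal.aleph 1).ord)
    (hX : PseudoAleph1Compact (∀ t, X t))
    (huniv : ∀ T₀ : Set T, T₀.Countable → AlphaUniversal (∀ t : T₀, X t.1) α)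
    (hher : ∀ T₀ : Set T, T₀.Countable →
      ∀ A : Set (∀ t : T₀, X t.1), PseudoAleph1Compact ↥A)
    (E : Set (∀ t, X t)) (hE : FunctionallyMeasurable E) :
    IsAlphaEmbedded α E := by
  obtain ⟨S, hS, hSE⟩ := hE.exists_countable_dependsOn hX
  exact statement10_general hS hSE (fun Q hQ => huniv Q hQ _) (fun Q hQ => hher Q hQ _)
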